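/- arXiv:2203.04418 — 2 statements merged into one kernel-verified Lean document; each statement's English description precedes it below -/
import Mathlib

section
/- Let X be a finite set and μ a positive measure on 2^X. Then the μ-top-difference semimetric D^μ satisfies Axiom 1: for all acyclic orders ≿, ≿_0, ⊵ on X such that ≿_0 is in-between ≿ and ⊵, D^μ(≿,⊵) = D^μ(≿,≿_0) + D^μ(≿_0,⊵). -/
open Classical Finset symmDiff

section PrefDefs

variable {X : Type*}

/-- The asymmetric part `R^>` of a binary relation `R`. -/
def asymPart (R : X → X → Prop) : X → X → Prop := fun x y => R x y ∧ ¬ R y x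

/-- `R` is acyclic: there is no cycle of pairwise distinct elements
`z_0 R^> z_1 R^> ⋯ R^> z_k R^> z_0`. -/
def AcyclicRel (R : X → X → Prop) : Prop :=
  ¬ ∃ (k : ℕ) (z : Fin (k + 1) → X), Function.Injective z ∧
      ∀ i : Fin (k + 1), asymPart R (z i) (z (i + 1))

/-- An acyclic order: a reflexive acyclic binary relation. -/
def AcyclicOrd (R : X → X → Prop) : Prop := Reflexive R ∧ AcyclicRel R

/-- `M(S,R)`: the set of `R`-maximal elements of `S`. -/
noncomputable def MaxSet [DecidableEq X] (S : Finset X) (R : X → X → Prop) : Finset X :=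
  S.filter fun x => ∀ y ∈ S, ¬ asymPart R y x

/-- The μ-top-difference semimetric, where the measure μ is given by the
weights `w x = μ {x}`. -/
noncomputable def Dmu [Fintype X] [DecidableEq X] (w : X → ℝ) (R R' : X → X → Prop) : ℝ :=
  ∑ S : Finset X, ∑ x ∈ symmDiff (MaxSet S R) (MaxSet S R'), w x

/-- The top-difference semimetric `D`. -/
noncomputable def Dtop [Fintype X] [DecidableEq X] (R R' : X → X → Prop) : ℕ :=
  ∑ S : Finset X, (symmDiff (MaxSet S R) (MaxSet S R')).card

/-- `≿ ⊕ (a,b)`: if `b ∼ a` delete `(b,a)`, if `a, b` are `≿`-incomparable add `(a,b)`. -/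
def oplusR (R : X → X → Prop) (a b : X) : X → X → Prop :=
  fun x y => (R x y ∧ ¬(R b a ∧ x = b ∧ y = a)) ∨ (¬ R b a ∧ x = a ∧ y = b)

/-- `≿ ⊖ (a,b)`: delete the pair `(a,b)`. -/
def ominusR (R : X → X → Prop) (a b : X) : X → X → Prop :=
  fun x y => R x y ∧ ¬(x = a ∧ y = b)

/-- `≿ → ≿_0 ↠ ⊵` : `R0` is a one-step perturbation of `R` toward `R'`. -/
def OneStep (R R0 R' : X → X → Prop) : Prop :=
  AcyclicOrd R0 ∧
  ((∃ a b, asymPart R a b ∧ ¬ asymPart R' a b ∧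
      (∀ x, asymPart R' x b → asymPart R x b) ∧ R0 = ominusR R a b) ∨
   (∃ a b, ¬ asymPart R a b ∧ ¬ asymPart R b a ∧ asymPart R' a b ∧ R0 = oplusR R a b))

/-- `Q` is in-between `R` and `R'` : `Q` is an n-step perturbation of `R` toward `R'`
for some positive integer n. -/
def InBetween (R R' Q : X → X → Prop) : Prop :=
  ∃ (n : ℕ) (c : Fin (n + 1) → (X → X → Prop)),
    OneStep R (c 0) R' ∧
    (∀ i : Fin n, OneStep (c i.castSucc) (c i.succ) R') ∧
    c (Fin.last n) = Q

/-- `N(b,≿)`: the number of `x ≠ b` with not `x ≻ b`. -/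
noncomputable def Nnum [Fintype X] (R : X → X → Prop) (b : X) : ℕ :=
  (Finset.univ.filter fun x => x ≠ b ∧ ¬ asymPart R x b).card

/-- `≿_{ab}`: the partial order whose asymmetric part is `(X \ {a,b}) × {a,b}`. -/
def RabRel (a b : X) : X → X → Prop :=
  fun x y => x = y ∨ ((x ≠ a ∧ x ≠ b) ∧ (y = a ∨ y = b))

/-- `≿_{ab}^+`: as `≿_{ab}` but with `a` ranked strictly above `b`. -/
def RabPlusRel (a b : X) : X → X → Prop :=
  fun x y => RabRel a b x y ∨ (x = a ∧ y = b)

/-- `d` is a semimetric on the set of acyclic orders on `X`. -/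
def IsSemimetricOn (d : (X → X → Prop) → (X → X → Prop) → ℝ) : Prop :=
  (∀ R R', AcyclicOrd R → AcyclicOrd R' → 0 ≤ d R R') ∧
  (∀ R, AcyclicOrd R → d R R = 0) ∧
  (∀ R R', AcyclicOrd R → AcyclicOrd R' → d R R' = d R' R) ∧
  (∀ R R' R'', AcyclicOrd R → AcyclicOrd R' → AcyclicOrd R'' →
    d R R'' ≤ d R R' + d R' R'')

/-- Axiom 1. -/
def Axiom1 (d : (X → X → Prop) → (X → X → Prop) → ℝ) : Prop :=
  ∀ R R0 R' : X → X → Prop, AcyclicOrd R → AcyclicOrd R' →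
    InBetween R R' R0 → d R R' = d R R0 + d R0 R'

/-- Axiom 2. -/
def Axiom2 (d : (X → X → Prop) → (X → X → Prop) → ℝ) : Prop :=
  ∀ a b : X, a ≠ b → d (RabRel a b) (RabPlusRel a b) = 1

/-- Axiom 3. -/
def Axiom3 [Fintype X] (d : (X → X → Prop) → (X → X → Prop) → ℝ) : Prop :=
  (∀ (R : X → X → Prop) (a b : X), AcyclicOrd R → a ≠ b →
      ¬ asymPart R a b → ¬ asymPart R b a → AcyclicOrd (oplusR R a b) →
      d R (oplusR R a b) = (2 : ℝ) ^ (Nnum R b - 1) * d (RabRel a b) (RabPlusRel a b)) ∧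
  (∀ (R : X → X → Prop) (a b : X), AcyclicOrd R → asymPart R a b →
      d R (ominusR R a b) = (2 : ℝ) ^ (Nnum R b) * d (RabRel a b) (RabPlusRel a b))

/-- Axiom 4. -/
def Axiom4 (d : (X → X → Prop) → (X → X → Prop) → ℝ) : Prop :=
  ∀ R R' : X → X → Prop, AcyclicOrd R → AcyclicOrd R' →
    (∀ x y, asymPart R x y ↔ asymPart R' x y) → d R R' = 0

end PrefDefs

/-!
If `Q` is a perturbation of `R` toward `R'`, then each strict upper contour set of `Q` is covered
by those of `R` and `R'`, and it contains at least one of the two. Since `x ∈ S` is maximal in `S`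
iff `S` misses the strict upper contour set of `x`, this gives `M(S, R) ∩ M(S, R') ⊆ M(S, Q) ⊆
M(S, R) ∪ M(S, R')`, and for sets in such a position the symmetric difference of the outer two is
the disjoint union of the symmetric differences with the middle one. The condition on upper
contour sets is transitive, so it passes from single perturbations to chains of them.
-/

section SymmDiff

variable {α : Type*}

theorem disjoint_symmDiff_of_inf_le_of_le_sup [GeneralizedBooleanAlgebra α] {a b c : α}
    (h_inf : a ⊓ c ≤ b) (h_sup : b ≤ a ⊔ c) : Disjoint (a ∆ b) (b ∆ c) := by
  have hac : Disjoint (a \ b) (c \ b) := by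
    rw [disjoint_iff, ← inf_sdiff, sdiff_eq_bot_iff]
    exact h_inf
  have hba : Disjoint (b \ a) (b \ c) := by
    rw [disjoint_iff, ← sdiff_sup, sdiff_eq_bot_iff]
    exact h_sup
  simp only [symmDiff_def, disjoint_sup_left, disjoint_sup_right]
  exact ⟨⟨disjoint_sdiff_self_left.mono_right sdiff_le, hba⟩,
    hac, disjoint_sdiff_self_right.mono_left sdiff_le⟩

theorem sum_symmDiff_eq_add [DecidableEq α] {M : Type*} [AddCommMonoid M] {s t u : Finset α}
    (h_inter : s ∩ u ⊆ t) (h_union : t ⊆ s ∪ u) (f : α → M) :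
    ∑ x ∈ s ∆ u, f x = ∑ x ∈ s ∆ t, f x + ∑ x ∈ t ∆ u, f x := by
  have hdisj : Disjoint (s ∆ t) (t ∆ u) := disjoint_symmDiff_of_inf_le_of_le_sup h_inter h_union
  have hunion : s ∆ u = s ∆ t ∪ t ∆ u := calc
    s ∆ u = (s ∆ t) ∆ (t ∆ u) := by rw [symmDiff_assoc, symmDiff_symmDiff_cancel_left]
    _ = s ∆ t ∪ t ∆ u := hdisj.symmDiff_eq_sup
  rw [hunion, Finset.sum_union hdisj]

end SymmDiff

section UpperContour

variable {X : Type*} {R Q Q' R' : X → X → Prop} {a b x y : X} {S : Finset X}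

/-- The strict upper contour set of `b`: the elements ranked strictly above `b`. -/
def strictUpperContour (R : X → X → Prop) (b : X) : Set X := {y | asymPart R y b}

theorem asymPart.ne (h : asymPart R a b) : a ≠ b := by
  rintro rfl
  exact h.2 h.1

theorem asymPart_ominusR_iff (hab : asymPart R a b) :
    asymPart (ominusR R a b) x y ↔ asymPart R x y ∧ ¬(x = a ∧ y = b) := by
  unfold asymPart ominusR at *
  grind

theorem asymPart_oplusR_iff (hne : a ≠ b) (hab : ¬asymPart R a b) (hba : ¬asymPart R b a) :
    asymPart (oplusR R a b) x y ↔ asymPart R x y ∨ (x = a ∧ y = b) := by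
  unfold asymPart oplusR at *
  grind

/-- `Q` lies between `R` and `R'` in the sense that each strict upper contour set of `Q` is covered
by those of `R` and `R'` and contains one of them; which one may depend on the element. -/
structure UpperContourBetween (R Q R' : X → X → Prop) : Prop where
  subset_union (b : X) :
    strictUpperContour Q b ⊆ strictUpperContour R b ∪ strictUpperContour R' b
  subset_or_subset (b : X) :
    strictUpperContour R b ⊆ strictUpperContour Q b ∨
      strictUpperContour R' b ⊆ strictUpperContour Q b

theorem upperContourBetween_ominusR (hab : asymPart R a b) (hab' : ¬asymPart R' a b)
    (hsub : strictUpperContour R' b ⊆ strictUpperContour R b) :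
    UpperContourBetween R (ominusR R a b) R' where
  subset_union _ _ hy := .inl ((asymPart_ominusR_iff hab).1 hy).1
  subset_or_subset c := by
    by_cases hc : c = b
    · subst hc
      refine .inr fun y hy => (asymPart_ominusR_iff hab).2 ⟨hsub hy, ?_⟩
      rintro ⟨rfl, -⟩
      exact hab' hy
    · exact .inl fun y hy => (asymPart_ominusR_iff hab).2 ⟨hy, fun h => hc h.2⟩

theorem upperContourBetween_oplusR (hab : ¬asymPart R a b) (hba : ¬asymPart R b a)
    (hab' : asymPart R' a b) : UpperContourBetween R (oplusR R a b) R' where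
  subset_union c y hy := by
    obtain hy | ⟨rfl, rfl⟩ := (asymPart_oplusR_iff hab'.ne hab hba).1 hy
    · exact .inl hy
    · exact .inr hab'
  subset_or_subset _ := .inl fun _ hy => (asymPart_oplusR_iff hab'.ne hab hba).2 (.inl hy)

theorem OneStep.upperContourBetween (h : OneStep R Q R') : UpperContourBetween R Q R' := by
  obtain ⟨-, ⟨a, b, hab, hab', hsub, rfl⟩ | ⟨a, b, hab, hba, hab', rfl⟩⟩ := h
  · exact upperContourBetween_ominusR hab hab' hsub
  · exact upperContourBetween_oplusR hab hba hab'

theorem UpperContourBetween.trans (h : UpperContourBetween R Q R')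
    (h' : UpperContourBetween Q Q' R') : UpperContourBetween R Q' R' where
  subset_union b :=
    (h'.subset_union b).trans (Set.union_subset (h.subset_union b) Set.subset_union_right)
  subset_or_subset b := by
    obtain hQ | hR' := h'.subset_or_subset b
    · exact (h.subset_or_subset b).imp (·.trans hQ) (·.trans hQ)
    · exact .inr hR'

theorem InBetween.upperContourBetween (h : InBetween R R' Q) : UpperContourBetween R Q R' := by
  obtain ⟨n, c, hzero, hsucc, rfl⟩ := h
  have hchain (i : Fin (n + 1)) : UpperContourBetween R (c i) R' := by
    induction i using Fin.induction with
    | zero => exact hzero.upperContourBetween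
    | succ i ih => exact ih.trans (hsucc i).upperContourBetween
  exact hchain (Fin.last n)

variable [DecidableEq X]

theorem mem_maxSet_iff_disjoint :
    x ∈ MaxSet S R ↔ x ∈ S ∧ Disjoint (S : Set X) (strictUpperContour R x) := by
  simp only [MaxSet, Finset.mem_filter, Set.disjoint_left, Finset.mem_coe, strictUpperContour,
    Set.mem_ofPred_eq]

namespace UpperContourBetween

theorem maxSet_inter_subset (h : UpperContourBetween R Q R') (S : Finset X) :
    MaxSet S R ∩ MaxSet S R' ⊆ MaxSet S Q := by
  intro x hx
  simp only [Finset.mem_inter, mem_maxSet_iff_disjoint] at hx ⊢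
  obtain ⟨⟨hxS, hR⟩, -, hR'⟩ := hx
  exact ⟨hxS, (hR.union_right hR').mono_right (h.subset_union x)⟩

theorem maxSet_subset_union (h : UpperContourBetween R Q R') (S : Finset X) :
    MaxSet S Q ⊆ MaxSet S R ∪ MaxSet S R' := by
  intro x hx
  simp only [Finset.mem_union, mem_maxSet_iff_disjoint] at hx ⊢
  obtain ⟨hxS, hQ⟩ := hx
  exact (h.subset_or_subset x).imp (⟨hxS, hQ.mono_right ·⟩) (⟨hxS, hQ.mono_right ·⟩)

theorem dmu_eq_add [Fintype X] (h : UpperContourBetween R Q R') (w : X → ℝ) :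
    Dmu w R R' = Dmu w R Q + Dmu w Q R' := by
  simp only [Dmu, ← Finset.sum_add_distrib]
  exact Finset.sum_congr rfl fun S _ =>
    sum_symmDiff_eq_add (h.maxSet_inter_subset S) (h.maxSet_subset_union S) w

end UpperContourBetween

end UpperContour

theorem stmt_3_general {X : Type*} [Fintype X] [DecidableEq X] (w : X → ℝ)
    (R R0 R' : X → X → Prop) (h : InBetween R R' R0) :
    Dmu w R R' = Dmu w R R0 + Dmu w R0 R' :=
  h.upperContourBetween.dmu_eq_add w

/-- The μ-top-difference semimetric satisfies Axiom 1. -/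
theorem stmt_3 {X : Type*} [Fintype X] [DecidableEq X]
    (w : X → ℝ) (hw : ∀ x, 0 ≤ w x)
    (R R0 R' : X → X → Prop) (hR : AcyclicOrd R) (hR' : AcyclicOrd R')
    (h : InBetween R R' R0) :
    Dmu w R R' = Dmu w R R0 + Dmu w R0 R' := by
  exact stmt_3_general w R R0 R' h
end

section
/- Let X be a finite set, μ a positive measure on 2^X, and ≿ an acyclic order on X with asymmetric part ≻. Then: (i) for distinct a,b ∈ X with neither a ≻ b nor b ≻ a such that ≿ ⊕ (a,b) is a well-defined acyclic order, D^μ(≿, ≿ ⊕ (a,b)) = 2^{N(b,≿)−1} · μ({b}); (ii) for a,b ∈ X with a ≻ b, D^μ(≿, ≿ ⊖ (a,b)) = 2^{N(b,≿)} · μ({b}); and (iii) for distinct a,b ∈ X, D^μ(≿_{ab}, ≿_{ab}^+) = μ({b}). -/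
open Classical Finset symmDiff

/-!
A set `S` has `b` among its `R`-maximal elements iff `b ∈ S` and the rest of `S` avoids everything
`R`-better than `b`, so this happens for exactly `2 ^ N(b, R)` sets. Enlarging the asymmetric part
shrinks every set of maximal elements, so the symmetric differences become set differences and the
distance is `∑ x, (2 ^ N(x, R) - 2 ^ N(x, R')) * μ {x}`. One additional strict pair `(a, b)`
lowers `N(b, ·)` by one and changes no other `N(x, ·)`, leaving a single term.
-/

section MaximalElements

variable {X : Type*} {R R' : X → X → Prop}

lemma asymPart_irrefl (R : X → X → Prop) (x : X) : ¬ asymPart R x x :=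
  fun h => h.2 h.1

/-- The elements other than `b` that are not strictly better than `b`; there are `N(b, R)` of
them, and they are the possible companions of `b` in a set where `b` is maximal. -/
noncomputable def nonDominators [Fintype X] (R : X → X → Prop) (b : X) : Finset X :=
  univ.filter fun x => x ≠ b ∧ ¬ asymPart R x b

lemma mem_nonDominators [Fintype X] {b x : X} :
    x ∈ nonDominators R b ↔ x ≠ b ∧ ¬ asymPart R x b := by
  simp [nonDominators]

lemma card_nonDominators [Fintype X] (R : X → X → Prop) (b : X) :
    (nonDominators R b).card = Nnum R b :=
  rfl

variable [DecidableEq X]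

lemma mem_maxSet {S : Finset X} {x : X} :
    x ∈ MaxSet S R ↔ x ∈ S ∧ ∀ y ∈ S, ¬ asymPart R y x := by
  simp [MaxSet]

lemma maxSet_subset_maxSet (h : asymPart R ≤ asymPart R') (S : Finset X) :
    MaxSet S R' ⊆ MaxSet S R := fun x hx => by
  obtain ⟨hxS, hmax⟩ := mem_maxSet.1 hx
  exact mem_maxSet.2 ⟨hxS, fun y hy hyx => hmax y hy (h y x hyx)⟩

variable [Fintype X]

lemma mem_maxSet_iff_mem_Icc {S : Finset X} {b : X} :
    b ∈ MaxSet S R ↔ S ∈ Icc {b} (insert b (nonDominators R b)) := by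
  rw [mem_maxSet, mem_Icc, singleton_subset_iff, subset_iff]
  simp only [mem_insert, mem_nonDominators]
  refine and_congr_right fun _ => forall₂_congr fun y _ => ?_
  by_cases hyb : y = b
  · simp [hyb, asymPart_irrefl]
  · simp [hyb]

lemma card_filter_mem_maxSet (R : X → X → Prop) (b : X) :
    (univ.filter fun S => b ∈ MaxSet S R).card = 2 ^ Nnum R b := by
  have hb : b ∉ nonDominators R b := fun h => (mem_nonDominators.1 h).1 rfl
  simp only [mem_maxSet_iff_mem_Icc, filter_univ_mem]
  rw [card_Icc_finset (by simp), card_insert_of_notMem hb, card_singleton, Nat.add_sub_cancel,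
    card_nonDominators]

lemma sum_sum_maxSet {M : Type*} [AddCommMonoid M] (w : X → M) (R : X → X → Prop) :
    ∑ S : Finset X, ∑ x ∈ MaxSet S R, w x = ∑ x, 2 ^ Nnum R x • w x :=
  calc ∑ S : Finset X, ∑ x ∈ MaxSet S R, w x
      = ∑ x, ∑ S with x ∈ MaxSet S R, w x := sum_comm' (by simp)
    _ = ∑ x, 2 ^ Nnum R x • w x := by simp only [sum_const, card_filter_mem_maxSet]

lemma dmu_comm (w : X → ℝ) (R R' : X → X → Prop) : Dmu w R R' = Dmu w R' R := by
  simp only [Dmu, symmDiff_comm]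

lemma dmu_eq_sum_of_asymPart_le (w : X → ℝ) (h : asymPart R ≤ asymPart R') :
    Dmu w R R' = ∑ x, ((2 : ℝ) ^ Nnum R x - 2 ^ Nnum R' x) * w x :=
  calc Dmu w R R'
      = ∑ S : Finset X, (∑ x ∈ MaxSet S R, w x - ∑ x ∈ MaxSet S R', w x) :=
        sum_congr rfl fun S _ => by
          have hS := maxSet_subset_maxSet h S
          rw [symmDiff_of_ge hS, sum_sdiff_eq_sub hS]
    _ = ∑ x, ((2 : ℝ) ^ Nnum R x - 2 ^ Nnum R' x) * w x := by
        simp [sum_sum_maxSet, sub_mul]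

end MaximalElements

/-- `R'` has exactly one more strict comparison than `R`, namely `a` above `b`. Only asymmetric
parts are compared, as these alone determine the maximal elements. -/
structure AddsStrictPair {X : Type*} (R R' : X → X → Prop) (a b : X) : Prop where
  not_asymPart : ¬ asymPart R a b
  asymPart_iff : ∀ x y, asymPart R' x y ↔ asymPart R x y ∨ (x = a ∧ y = b)

namespace AddsStrictPair

variable {X : Type*} {R R' : X → X → Prop} {a b : X}

lemma asymPart_right (h : AddsStrictPair R R' a b) : asymPart R' a b :=
  (h.asymPart_iff a b).2 (.inr ⟨rfl, rfl⟩)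

lemma ne (h : AddsStrictPair R R' a b) : a ≠ b := by
  rintro rfl
  exact asymPart_irrefl R' a h.asymPart_right

lemma asymPart_le (h : AddsStrictPair R R' a b) : asymPart R ≤ asymPart R' :=
  fun x y hxy => (h.asymPart_iff x y).2 (.inl hxy)

variable [Fintype X]

lemma nnum_eq_of_ne (h : AddsStrictPair R R' a b) {x : X} (hx : x ≠ b) :
    Nnum R x = Nnum R' x := by
  simp [Nnum, h.asymPart_iff, hx]

lemma nonDominators_eq_insert [DecidableEq X] (h : AddsStrictPair R R' a b) :
    nonDominators R b = insert a (nonDominators R' b) := by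
  ext x
  simp only [mem_insert, mem_nonDominators, h.asymPart_iff]
  by_cases hxa : x = a
  · simp [hxa, h.ne, h.not_asymPart]
  · simp [hxa]

lemma nnum_eq_add_one (h : AddsStrictPair R R' a b) : Nnum R b = Nnum R' b + 1 := by
  have ha : a ∉ nonDominators R' b := fun ha => (mem_nonDominators.1 ha).2 h.asymPart_right
  rw [← card_nonDominators, h.nonDominators_eq_insert, card_insert_of_notMem ha,
    card_nonDominators]

lemma dmu_eq [DecidableEq X] (h : AddsStrictPair R R' a b) (w : X → ℝ) :
    Dmu w R R' = (2 : ℝ) ^ Nnum R' b * w b := by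
  rw [dmu_eq_sum_of_asymPart_le w h.asymPart_le,
    sum_eq_single b (fun x _ hx => by rw [h.nnum_eq_of_ne hx, sub_self, zero_mul]) (by simp),
    h.nnum_eq_add_one]
  ring

end AddsStrictPair

section Perturbations

variable {X : Type*} {R : X → X → Prop} {a b : X}

lemma addsStrictPair_oplusR (hne : a ≠ b) (hab : ¬ asymPart R a b) (hba : ¬ asymPart R b a) :
    AddsStrictPair R (oplusR R a b) a b := by
  refine ⟨hab, fun x y => ?_⟩
  simp only [asymPart, oplusR] at *
  by_cases R b a <;> grind

lemma addsStrictPair_ominusR (hab : asymPart R a b) :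
    AddsStrictPair (ominusR R a b) R a b := by
  refine ⟨by simp [asymPart, ominusR], fun x y => ?_⟩
  simp only [asymPart, ominusR] at *
  grind

lemma addsStrictPair_rabRel (hne : a ≠ b) :
    AddsStrictPair (RabRel a b) (RabPlusRel a b) a b := by
  refine ⟨?_, fun x y => ?_⟩ <;> simp only [asymPart, RabPlusRel, RabRel] <;> grind

lemma nnum_rabPlusRel [Fintype X] : Nnum (RabPlusRel a b) b = 0 := by
  rw [← card_nonDominators, card_eq_zero, eq_empty_iff_forall_notMem]
  intro x
  simp only [mem_nonDominators, asymPart, RabPlusRel, RabRel]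
  grind

end Perturbations

theorem stmt_4_general {X : Type*} [Fintype X] [DecidableEq X] (w : X → ℝ) (R : X → X → Prop) :
    (∀ a b : X, a ≠ b → ¬ asymPart R a b → ¬ asymPart R b a →
        Dmu w R (oplusR R a b) = (2 : ℝ) ^ (Nnum R b - 1) * w b) ∧
    (∀ a b : X, asymPart R a b →
        Dmu w R (ominusR R a b) = (2 : ℝ) ^ (Nnum R b) * w b) ∧
    (∀ a b : X, a ≠ b → Dmu w (RabRel a b) (RabPlusRel a b) = w b) := by
  refine ⟨fun a b hne hab hba => ?_, fun a b hab => ?_, fun a b hne => ?_⟩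
  · have h := addsStrictPair_oplusR hne hab hba
    rw [h.dmu_eq, h.nnum_eq_add_one, Nat.add_sub_cancel]
  · rw [dmu_comm, (addsStrictPair_ominusR hab).dmu_eq]
  · rw [(addsStrictPair_rabRel hne).dmu_eq, nnum_rabPlusRel, pow_zero, one_mul]

/-- the values of `D^μ` at one-step additions and deletions, and at the
pair `(≿_{ab}, ≿_{ab}^+)`. -/
theorem stmt_4 {X : Type*} [Fintype X] [DecidableEq X]
    (w : X → ℝ) (hw : ∀ x, 0 ≤ w x)
    (R : X → X → Prop) (hR : AcyclicOrd R) :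
    (∀ a b : X, a ≠ b → ¬ asymPart R a b → ¬ asymPart R b a →
        AcyclicOrd (oplusR R a b) →
        Dmu w R (oplusR R a b) = (2 : ℝ) ^ (Nnum R b - 1) * w b) ∧
    (∀ a b : X, asymPart R a b →
        Dmu w R (ominusR R a b) = (2 : ℝ) ^ (Nnum R b) * w b) ∧
    (∀ a b : X, a ≠ b → Dmu w (RabRel a b) (RabPlusRel a b) = w b) :=
  let ⟨hplus, hminus, hpair⟩ := stmt_4_general w R
  ⟨fun a b hne hab hba _ => hplus a b hne hab hba, hminus, hpair⟩
end
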